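/- arXiv:1810.00332 — 2 statements merged into one kernel-verified Lean document; each statement's English description precedes it below -/
import Mathlib

section
/- Let Y be an object of D^b(A-mod). Then Y lies in K^b(A-proj) (i.e. Y is a perfect complex) if and only if for every object X of D^b(A-mod) one has Hom_{D^b(A-mod)}(Y, Σ^i(X)) = 0 for all sufficiently large i. -/
/-!
STATEMENT 4. Let `Y` be an object of `D^b(A-mod)`.  Then `Y` lies in `K^b(A-proj)`
(i.e. `Y` is a perfect complex) if and only if for every object `X` of `D^b(A-mod)` one has
`Hom(Y, Σ^i X) = 0` for all sufficiently large `i`.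

Here `D^b(A-mod)` is realized inside the unbounded derived category `D(A-Mod)` as the full
subcategory of complexes with bounded, finitely generated cohomology, and `K^b(A-proj)` as
the full subcategory of perfect complexes, i.e. objects isomorphic to the image of a bounded
complex of finitely generated projective `A`-modules.
-/

open CategoryTheory Limits

/-- An object of the unbounded derived category of `A`-modules lies in (the essential image
of) `D^b(A-mod)` if its cohomology is finitely generated in each degree and vanishes in all
but finitely many degrees. -/
def isDb (A : Type) [Ring A] [HasDerivedCategory.{w} (ModuleCat.{0} A)]
    (X : DerivedCategory (ModuleCat.{0} A)) : Prop :=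
  (∀ n : ℤ, Module.Finite A ((DerivedCategory.homologyFunctor (ModuleCat.{0} A) n).obj X)) ∧
  (∃ a b : ℤ, ∀ n : ℤ, (n < a ∨ b < n) →
    IsZero ((DerivedCategory.homologyFunctor (ModuleCat.{0} A) n).obj X))

/-- An object of the unbounded derived category of `A`-modules lies in `K^b(A-proj)` if it is
isomorphic to a bounded complex of finitely generated projective `A`-modules. -/
def isPerf (A : Type) [Ring A] [HasDerivedCategory.{w} (ModuleCat.{0} A)]
    (X : DerivedCategory (ModuleCat.{0} A)) : Prop :=
  ∃ P : CochainComplex (ModuleCat.{0} A) ℤ,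
    (∀ n : ℤ, Projective (P.X n)) ∧ (∀ n : ℤ, Module.Finite A (P.X n)) ∧
    (∃ a b : ℤ, ∀ n : ℤ, (n < a ∨ b < n) → IsZero (P.X n)) ∧
    Nonempty (DerivedCategory.Q.obj P ≅ X)

/-!
A perfect complex is K-projective and bounded below, hence has no maps to complexes concentrated
in degrees below it. Conversely, the test object `A ⧸ J`, with `J` the Jacobson radical, suffices.
If `Y` has cohomology in degrees `m, …, n` and no map to `A ⧸ J` placed in degree `m - 1`, cover the
top cohomology by a finite free module placed in degree `n`: the cone has the same two properties
with `n` replaced by `n - 1`. For `m = n`, `Y` is a finite module `M` with `Ext¹(M, A ⧸ J) = 0`.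
In a free presentation `0 → K → F → M → 0`, the semisimple module `K ⧸ rad K` is a retract of a
power of `A ⧸ J`, so the projection `K → K ⧸ rad K` extends to `F`, and then lifts to a map `F → K`.
Its restriction to `K` is the identity modulo `rad K`, hence bijective by Nakayama's lemma, and the
presentation splits.
-/

section Module

variable {A : Type*} [Ring A] {M : Type*} [AddCommGroup M] [Module A M]

instance isSemisimpleModule_quotient_jacobson [IsSemisimpleRing (A ⧸ Ring.jacobson A)] :
    IsSemisimpleModule A (A ⧸ Ring.jacobson A) :=
  let f : (A ⧸ Ring.jacobson A) →ₛₗ[Ideal.Quotient.mk (Ring.jacobson A)] (A ⧸ Ring.jacobson A) :=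
    { AddMonoidHom.id _ with map_smul' _ _ := rfl }
  (f.isSemisimpleModule_iff_of_bijective Function.bijective_id).2 inferInstance

lemma exists_sum_comp_quotient_jacobson_eq_id [IsSemisimpleRing (A ⧸ Ring.jacobson A)]
    [Module.Finite A M] (hM : Module.jacobson A M = ⊥) :
    ∃ (r : ℕ) (s : Fin r → M →ₗ[A] A ⧸ Ring.jacobson A)
      (p : Fin r → (A ⧸ Ring.jacobson A) →ₗ[A] M), ∑ i, p i ∘ₗ s i = LinearMap.id := by
  obtain ⟨r, φ, hφ⟩ := Module.Finite.exists_fin' A M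
  let φᵢ (i : Fin r) : A →ₗ[A] M := φ ∘ₗ LinearMap.single A (fun _ ↦ A) i
  have hker (i : Fin r) : Ring.jacobson A ≤ LinearMap.ker (φᵢ i) :=
    (Module.le_comap_jacobson (φᵢ i)).trans (by rw [hM, Submodule.comap_bot])
  let p (i : Fin r) : (A ⧸ Ring.jacobson A) →ₗ[A] M := (Ring.jacobson A).liftQ (φᵢ i) (hker i)
  have hp : Function.Surjective (LinearMap.lsum A (fun _ ↦ A ⧸ Ring.jacobson A) ℕ p) := by
    intro y
    obtain ⟨x, rfl⟩ := hφ y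
    refine ⟨fun i ↦ Submodule.Quotient.mk (x i), ?_⟩
    calc LinearMap.lsum A (fun _ ↦ A ⧸ Ring.jacobson A) ℕ p (fun i ↦ Submodule.Quotient.mk (x i))
      _ = ∑ i, φ (Pi.single i (x i)) := by rw [LinearMap.lsum_apply, LinearMap.sum_apply]; rfl
      _ = φ x := by rw [← map_sum, Finset.univ_sum_single]
  obtain ⟨s, hs⟩ := IsSemisimpleModule.lifting_property _ hp LinearMap.id
  refine ⟨r, fun i ↦ LinearMap.proj i ∘ₗ s, p, ?_⟩
  simpa [LinearMap.lsum_apply, LinearMap.ext_iff] using hs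

lemma eq_top_of_sup_jacobson_eq_top [IsCoatomic (Submodule A M)] {N : Submodule A M}
    (h : N ⊔ Module.jacobson A M = ⊤) : N = ⊤ := by
  by_contra hN
  obtain ⟨P, hP, hNP⟩ := (eq_top_or_exists_le_coatom N).resolve_left hN
  exact hP.1 (top_le_iff.1 (h ▸ sup_le hNP (sInf_le hP)))

lemma bijective_of_mkQ_jacobson_comp_eq [IsNoetherian A M] {u : M →ₗ[A] M}
    (hu : (Module.jacobson A M).mkQ ∘ₗ u = (Module.jacobson A M).mkQ) : Function.Bijective u := by
  refine IsNoetherian.bijective_of_surjective_endomorphism u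
    (LinearMap.range_eq_top.1 (eq_top_of_sup_jacobson_eq_top (eq_top_iff.2 fun x _ ↦ ?_)))
  have hx : x - u x ∈ Module.jacobson A M :=
    (Submodule.Quotient.eq _).1 (LinearMap.congr_fun hu x).symm
  simpa using Submodule.add_mem_sup (LinearMap.mem_range_self u x) hx

lemma exists_leftInverse_of_mkQ_jacobson_extends [IsNoetherian A M] {F : Type*} [AddCommGroup F]
    [Module A F] [Module.Projective A F] (i : M →ₗ[A] F) (q : F →ₗ[A] M ⧸ Module.jacobson A M)
    (hq : q ∘ₗ i = (Module.jacobson A M).mkQ) : ∃ r : F →ₗ[A] M, r ∘ₗ i = LinearMap.id := by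
  obtain ⟨r, hr⟩ := Module.projective_lifting_property (Module.jacobson A M).mkQ q
    (Submodule.mkQ_surjective _)
  have hu : Function.Bijective (r ∘ₗ i) := bijective_of_mkQ_jacobson_comp_eq
    (by rw [← LinearMap.comp_assoc, hr, hq])
  let e : M ≃ₗ[A] M := .ofBijective (r ∘ₗ i) hu
  exact ⟨e.symm ∘ₗ r, LinearMap.ext fun x ↦ e.symm_apply_apply x⟩

end Module

section DerivedCategory

open DerivedCategory Pretriangulated

lemma hom_obj_eq_zero_of_sum_comp_eq_id {C D : Type*} [Category* C] [Preadditive C] [Category* D]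
    [Preadditive D] (F : C ⥤ D) [F.Additive] {Y : D} {T N : C} {ι : Type*} [Fintype ι]
    (s : ι → (N ⟶ T)) (p : ι → (T ⟶ N)) (hsp : ∑ i, s i ≫ p i = 𝟙 N)
    (h : ∀ f : Y ⟶ F.obj T, f = 0) (f : Y ⟶ F.obj N) : f = 0 := by
  rw [← Category.comp_id f, ← F.map_id, ← hsp, F.map_sum, Preadditive.comp_sum]
  refine Finset.sum_eq_zero fun i _ ↦ ?_
  rw [F.map_comp, ← Category.assoc, h (f ≫ F.map (s i)), zero_comp]

lemma exists_eq_mor₁_comp_of_mor₃_comp_shift_eq_zero {D : Type*} [Category* D] [HasZeroObject D]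
    [HasShift D ℤ] [Preadditive D] [∀ n : ℤ, (shiftFunctor D n).Additive] [Pretriangulated D]
    {T : Triangle D} (hT : T ∈ distTriang D) {X : D} (φ : T.obj₁ ⟶ X)
    (hφ : T.mor₃ ≫ φ⟦(1 : ℤ)⟧' = 0) : ∃ ψ : T.obj₂ ⟶ X, φ = T.mor₁ ≫ ψ := by
  obtain ⟨χ, hχ : φ⟦1⟧' = (-T.mor₁⟦1⟧') ≫ χ⟩ :=
    Triangle.yoneda_exact₃ _ (rot_of_distTriang _ hT) (φ⟦(1 : ℤ)⟧') hφ
  obtain ⟨ψ, rfl⟩ : ∃ ψ : T.obj₂ ⟶ X, ψ⟦1⟧' = χ := (shiftFunctor D (1 : ℤ)).map_surjective χ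
  refine ⟨-ψ, (shiftFunctor D (1 : ℤ)).map_injective ?_⟩
  simpa using hχ

variable {C : Type*} [Category* C] [Abelian C]

instance projective_single_X (n : ℤ) (P : C) [Projective P] (i : ℤ) :
    Projective (((HomologicalComplex.single C (.up ℤ) n).obj P).X i) := by
  by_cases h : i = n
  · exact .of_iso (HomologicalComplex.singleObjXIsoOfEq (.up ℤ) n P i h).symm ‹_›
  · exact (HomologicalComplex.isZero_single_obj_X (.up ℤ) n P i h).projective

lemma isKProjective_of_forall_projective (P : CochainComplex C ℤ) (b : ℤ)
    (hP : ∀ n, Projective (P.X n)) (hb : ∀ n, b < n → IsZero (P.X n)) : P.IsKProjective := by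
  have : P.IsStrictlyLE b := (P.isStrictlyLE_iff b).2 hb
  exact CochainComplex.isKProjective_of_projective P b

lemma exists_homologyMap_single_eq_comp (K : CochainComplex C ℤ) (n : ℤ) {P : C} [Projective P]
    (p : P ⟶ K.homology n) :
    ∃ g : (HomologicalComplex.single C (.up ℤ) n).obj P ⟶ K, HomologicalComplex.homologyMap g n =
      (HomologicalComplex.singleObjHomologySelfIso (.up ℤ) n P).hom ≫ p := by
  let q : P ⟶ K.cycles n := Projective.factorThru p (K.homologyπ n)
  have hq : q ≫ K.homologyπ n = p := Projective.factorThru_comp _ _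
  let g : (HomologicalComplex.single C (.up ℤ) n).obj P ⟶ K :=
    HomologicalComplex.mkHomFromSingle (q ≫ K.iCycles n) (by simp)
  have hg : HomologicalComplex.cyclesMap g n =
      (HomologicalComplex.singleObjCyclesSelfIso (.up ℤ) n P).hom ≫ q := by
    rw [← cancel_mono (K.iCycles n)]
    simp [g, HomologicalComplex.singleObjCyclesSelfIso_hom]
  refine ⟨g, ?_⟩
  rw [← cancel_epi (HomologicalComplex.homologyπ _ n), HomologicalComplex.homologyπ_naturality,
    HomologicalComplex.homologyπ_singleObjHomologySelfIso_hom_assoc, hg, Category.assoc, hq]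

variable [HasDerivedCategory.{w} C]

lemma Q_map_surjective_of_isKProjective (P K : CochainComplex C ℤ) [P.IsKProjective] :
    Function.Surjective fun g : P ⟶ K ↦ Q.map g := by
  intro f
  obtain ⟨g, hg⟩ := (CochainComplex.IsKProjective.Qh_map_bijective P
    ((HomotopyCategory.quotient _ _).obj K)).surjective
    ((quotientCompQhIso _).hom.app P ≫ f ≫ (quotientCompQhIso _).inv.app K)
  obtain ⟨g, rfl⟩ := (HomotopyCategory.quotient _ _).map_surjective g
  refine ⟨g, ?_⟩
  rw [← cancel_epi ((quotientCompQhIso _).hom.app P), ← quotientCompQhIso_hom_naturality, hg]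
  simp

lemma hom_eq_zero_of_isStrictlyGE_of_isLE (P : CochainComplex C ℤ) [P.IsKProjective]
    (Z : DerivedCategory C) {a b : ℤ} (hba : b < a) [P.IsStrictlyGE a] [Z.IsLE b]
    (f : Q.obj P ⟶ Z) : f = 0 := by
  obtain ⟨K, _, ⟨e⟩⟩ := Z.exists_iso_Q_obj_of_isLE b
  obtain ⟨g, hg : Q.map g = f ≫ e.hom⟩ := Q_map_surjective_of_isKProjective P K (f ≫ e.hom)
  have hg0 : g = 0 := by
    ext n : 1
    obtain hn | hn := lt_or_ge n a
    · exact (P.isZero_of_isStrictlyGE a n hn).eq_of_src _ _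
    · exact (K.isZero_of_isStrictlyLE b n (by lia)).eq_of_tgt _ _
  rw [← cancel_mono e.hom, ← hg, hg0, Functor.map_zero, zero_comp]

lemma singleFunctor_hom_eq_zero_of_projective (P : C) [Projective P] (Z : DerivedCategory C)
    {m n : ℤ} (hmn : m < n) [Z.IsLE m] (f : (singleFunctor C n).obj P ⟶ Z) : f = 0 := by
  let P' : CochainComplex C ℤ := (HomologicalComplex.single C (.up ℤ) n).obj P
  have : P'.IsStrictlyLE n := inferInstance
  have : P'.IsKProjective := CochainComplex.isKProjective_of_projective P' n
  exact hom_eq_zero_of_isStrictlyGE_of_isLE P' Z hmn f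

lemma singleFunctor_shift_hom_eq_zero_of_projective (P : C) [Projective P] (Z : DerivedCategory C)
    {m n : ℤ} (hmn : m < n) [Z.IsLE m] (f : ((singleFunctor C (n + 1)).obj P)⟦(1 : ℤ)⟧ ⟶ Z) :
    f = 0 := by
  let e : ((singleFunctor C (n + 1)).obj P)⟦(1 : ℤ)⟧ ≅ (singleFunctor C n).obj P :=
    ((singleFunctors C).shiftIso 1 n (n + 1) (by lia)).app P
  rw [← cancel_epi e.inv, comp_zero]
  exact singleFunctor_hom_eq_zero_of_projective P Z hmn _

lemma exists_homologyFunctor_map_eq_comp (Y : DerivedCategory C) (n : ℤ) {P : C} [Projective P]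
    (p : P ⟶ (homologyFunctor C n).obj Y) :
    ∃ (f : (singleFunctor C n).obj P ⟶ Y)
      (i : (homologyFunctor C n).obj ((singleFunctor C n).obj P) ≅ P),
      (homologyFunctor C n).map f = i.hom ≫ p := by
  let K : CochainComplex C ℤ := Q.objPreimage Y
  let e : Q.obj K ≅ Y := Q.objObjPreimageIso Y
  obtain ⟨g, hg⟩ := exists_homologyMap_single_eq_comp K n
    (p ≫ (homologyFunctor C n).map e.inv ≫ (homologyFunctorFactors C n).hom.app K)
  let i : (homologyFunctor C n).obj (Q.obj ((HomologicalComplex.single C (.up ℤ) n).obj P)) ≅ P :=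
    (homologyFunctorFactors C n).app _ ≪≫ HomologicalComplex.singleObjHomologySelfIso (.up ℤ) n P
  have hg' : (homologyFunctor C n).map (Q.map g) =
      i.hom ≫ p ≫ (homologyFunctor C n).map e.inv := by
    rw [← cancel_mono ((homologyFunctorFactors C n).hom.app K)]
    refine (homologyFunctorFactors_hom_naturality g n).trans ?_
    rw [hg, Category.assoc, Category.assoc]
    exact (Category.assoc ((homologyFunctorFactors C n).hom.app _) _ _).symm
  have hf : (homologyFunctor C n).map (Q.map g ≫ e.hom) = i.hom ≫ p := by
    rw [Functor.map_comp, hg']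
    simp [← Functor.map_comp]
  exact ⟨Q.map g ≫ e.hom, i, hf⟩

lemma isZero_homology_singleFunctor (X : C) {n i : ℤ} (h : i ≠ n) :
    IsZero ((homologyFunctor C i).obj ((singleFunctor C n).obj X)) := by
  obtain h | h := lt_or_gt_of_ne h
  · exact isZero_of_isGE _ n i h
  · exact isZero_of_isLE _ n i h

section Triangle

variable {X Y Z : DerivedCategory C} {f : X ⟶ Y} {g : Y ⟶ Z} {d : Z ⟶ X⟦(1 : ℤ)⟧}

lemma isLE_obj₃_of_epi_homologyFunctor_map (hT : Triangle.mk f g d ∈ distTriang _) (n : ℤ)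
    [X.IsLE (n + 1)] [Y.IsLE (n + 1)] [Epi ((homologyFunctor C (n + 1)).map f)] : Z.IsLE n := by
  rw [isLE_iff]
  intro i hi
  refine (HomologySequence.exact₃ _ hT i (i + 1) rfl).isZero_X₂ ?_
    ((X.isZero_of_isLE (n + 1) (i + 1) (by lia)).eq_of_tgt _ _)
  obtain rfl | hi : i = n + 1 ∨ n + 1 < i := by lia
  · exact (HomologySequence.epi_homologyMap_mor₁_iff _ hT _).1 ‹_›
  · exact (Y.isZero_of_isLE (n + 1) i hi).eq_of_src _ _

lemma isGE_obj₃ (hT : Triangle.mk f g d ∈ distTriang _) (n : ℤ) [X.IsGE (n + 1)] [Y.IsGE n] :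
    Z.IsGE n :=
  TStructure.t.isGE₂ _ (rot_of_distTriang _ hT) n ‹Y.IsGE n› (TStructure.t.isGE_shift X (n + 1) 1 n)

end Triangle

lemma exists_comp_eq_of_shortExact {S : ShortComplex C} (hS : S.ShortExact) (n : ℤ) {X : C}
    (h : ∀ f : (singleFunctor C n).obj S.X₃ ⟶ (singleFunctor C (n - 1)).obj X, f = 0)
    (φ : S.X₁ ⟶ X) : ∃ ψ : S.X₂ ⟶ X, S.f ≫ ψ = φ := by
  let T : Triangle (DerivedCategory C) :=
    triangleOfSES (hS.map_of_exact (HomologicalComplex.single C (.up ℤ) n))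
  have hT : T ∈ distTriang _ := triangleOfSES_distinguished _
  let φ' : T.obj₁ ⟶ (singleFunctor C n).obj X := (singleFunctor C n).map φ
  let e : ((singleFunctor C n).obj X)⟦(1 : ℤ)⟧ ≅ (singleFunctor C (n - 1)).obj X :=
    ((singleFunctors C).shiftIso 1 (n - 1) n (by lia)).app X
  have hφ : T.mor₃ ≫ φ'⟦1⟧' = 0 := by
    rw [← cancel_mono e.hom, zero_comp]
    exact h _
  obtain ⟨ψ, hψ⟩ : ∃ ψ : T.obj₂ ⟶ (singleFunctor C n).obj X, φ' = T.mor₁ ≫ ψ :=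
    exists_eq_mor₁_comp_of_mor₃_comp_shift_eq_zero hT φ' hφ
  obtain ⟨ψ, rfl⟩ := (singleFunctor C n).map_surjective ψ
  exact ⟨ψ, (singleFunctor C n).map_injective (by rw [Functor.map_comp]; exact hψ.symm)⟩

end DerivedCategory

section ModuleCat

open DerivedCategory Pretriangulated

universe u

variable {A : Type u} [Ring A]

lemma exists_epi_of_finite (M : ModuleCat.{u} A) [Module.Finite A M] :
    ∃ (P : ModuleCat.{u} A) (_ : Projective P) (_ : Module.Finite A P) (p : P ⟶ M), Epi p := by
  obtain ⟨r, φ, hφ⟩ := Module.Finite.exists_fin' A M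
  exact ⟨.of A (Fin r → A), (IsProjective.iff_projective _).1 inferInstance,
    inferInstanceAs (Module.Finite A (Fin r → A)), ModuleCat.ofHom φ,
    (ModuleCat.epi_iff_surjective _).2 hφ⟩

lemma finite_of_isZero {M : ModuleCat.{u} A} (hM : IsZero M) : Module.Finite A M :=
  have := ModuleCat.subsingleton_of_isZero hM
  inferInstance

lemma finite_X₂_of_exact [IsNoetherianRing A] {S : ShortComplex (ModuleCat.{u} A)} (hS : S.Exact)
    (h₁ : Module.Finite A S.X₁) (h₃ : Module.Finite A S.X₃) : Module.Finite A S.X₂ := by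
  have : IsNoetherian A S.X₂ := isNoetherian_of_range_eq_ker S.f.hom S.g.hom
    hS.moduleCat_range_eq_ker
  infer_instance

instance finite_single_X (n : ℤ) (M : ModuleCat.{u} A) [Module.Finite A M] (i : ℤ) :
    Module.Finite A (((HomologicalComplex.single (ModuleCat.{u} A) (.up ℤ) n).obj M).X i) := by
  by_cases h : i = n
  · exact .equiv (HomologicalComplex.singleObjXIsoOfEq (.up ℤ) n M i h).symm.toLinearEquiv
  · exact finite_of_isZero (HomologicalComplex.isZero_single_obj_X (.up ℤ) n M i h)

variable [HasDerivedCategory.{w} (ModuleCat.{u} A)]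

lemma finite_homology_singleFunctor (M : ModuleCat.{u} A) [Module.Finite A M] (n i : ℤ) :
    Module.Finite A ((homologyFunctor (ModuleCat.{u} A) i).obj ((singleFunctor _ n).obj M)) := by
  obtain rfl | h := eq_or_ne i n
  · let e : (homologyFunctor _ i).obj ((singleFunctor _ i).obj M) ≅ M :=
      (singleFunctorCompHomologyFunctorIso _ i).app M
    exact .equiv e.symm.toLinearEquiv
  · exact finite_of_isZero (isZero_homology_singleFunctor M h)

lemma exists_singleFunctor_hom_epi_homologyFunctor_map (Y : DerivedCategory (ModuleCat.{u} A))
    (n : ℤ) [Module.Finite A ((homologyFunctor (ModuleCat.{u} A) n).obj Y)] :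
    ∃ (P : ModuleCat.{u} A) (_ : Projective P) (_ : Module.Finite A P)
      (f : (singleFunctor _ n).obj P ⟶ Y), Epi ((homologyFunctor _ n).map f) := by
  obtain ⟨P, _, _, p, _⟩ := exists_epi_of_finite ((homologyFunctor (ModuleCat.{u} A) n).obj Y)
  obtain ⟨f, i, hf⟩ := exists_homologyFunctor_map_eq_comp Y n p
  exact ⟨P, ‹_›, ‹_›, f, hf ▸ epi_comp _ _⟩

lemma projective_of_singleFunctor_hom_eq_zero [IsNoetherianRing A]
    [IsSemisimpleRing (A ⧸ Ring.jacobson A)] (M : ModuleCat.{u} A) [Module.Finite A M] (n : ℤ)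
    (h : ∀ f : (singleFunctor _ n).obj M ⟶
      (singleFunctor _ (n - 1)).obj (ModuleCat.of A (A ⧸ Ring.jacobson A)), f = 0) :
    Projective M := by
  obtain ⟨F, _, _, p, _⟩ := exists_epi_of_finite M
  let S : ShortComplex (ModuleCat.{u} A) := .mk (kernel.ι p) p (kernel.condition p)
  have hS : S.ShortExact := { exact := ShortComplex.exact_kernel p }
  have : Module.Projective A S.X₂ := (IsProjective.iff_projective _).2 ‹Projective F›
  have : IsNoetherian A S.X₂ := isNoetherian_of_isNoetherianRing_of_finite A F
  have : IsNoetherian A S.X₁ := isNoetherian_of_injective S.f.hom hS.moduleCat_injective_f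
  obtain ⟨r, s, t, hst⟩ := exists_sum_comp_quotient_jacobson_eq_id
    (Module.jacobson_quotient_jacobson A S.X₁)
  have hrad : ∀ f : (singleFunctor _ n).obj M ⟶
      (singleFunctor _ (n - 1)).obj (ModuleCat.of A (S.X₁ ⧸ Module.jacobson A S.X₁)), f = 0 :=
    hom_obj_eq_zero_of_sum_comp_eq_id _ (fun i ↦ ModuleCat.ofHom (s i))
      (fun i ↦ ModuleCat.ofHom (t i)) (ModuleCat.hom_ext (by simpa using hst)) h
  obtain ⟨q, hq⟩ := exists_comp_eq_of_shortExact hS n hrad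
    (ModuleCat.ofHom (Module.jacobson A S.X₁).mkQ)
  obtain ⟨ρ, hρ⟩ := exists_leftInverse_of_mkQ_jacobson_extends S.f.hom q.hom
    (congrArg ModuleCat.Hom.hom hq)
  let σ : S.Splitting := .ofExactOfRetraction S hS.exact (ModuleCat.ofHom ρ)
    (ModuleCat.hom_ext hρ) hS.epi_g
  exact Retract.projective ⟨σ.s, p, σ.s_g⟩

end ModuleCat

section Perfect

open DerivedCategory Pretriangulated

variable {A : Type} [Ring A] [HasDerivedCategory.{w} (ModuleCat.{0} A)]

lemma isDb_singleFunctor (M : ModuleCat.{0} A) [Module.Finite A M] (n : ℤ) :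
    isDb A ((singleFunctor _ n).obj M) :=
  ⟨finite_homology_singleFunctor M n, n, n, fun _ hi ↦ isZero_homology_singleFunctor M (by lia)⟩

namespace isPerf

lemma singleFunctor_obj (P : ModuleCat.{0} A) [Projective P] [Module.Finite A P] (n : ℤ) :
    isPerf A ((singleFunctor _ n).obj P) :=
  ⟨(HomologicalComplex.single _ (.up ℤ) n).obj P, inferInstance, inferInstance,
    ⟨n, n, fun _ hi ↦ HomologicalComplex.isZero_single_obj_X (.up ℤ) n P _ (by lia)⟩, ⟨.refl _⟩⟩

lemma of_iso {X Y : DerivedCategory (ModuleCat.{0} A)} (e : X ≅ Y) (hX : isPerf A X) :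
    isPerf A Y := by
  obtain ⟨P, hproj, hfin, hbdd, ⟨i⟩⟩ := hX
  exact ⟨P, hproj, hfin, hbdd, ⟨i ≪≫ e⟩⟩

lemma shift {X : DerivedCategory (ModuleCat.{0} A)} (hX : isPerf A X) (m : ℤ) :
    isPerf A (X⟦m⟧) := by
  obtain ⟨P, hproj, hfin, ⟨a, b, hP⟩, ⟨e⟩⟩ := hX
  exact ⟨P⟦m⟧, fun n ↦ hproj (n + m), fun n ↦ hfin (n + m),
    ⟨a - m, b - m, fun n hn ↦ hP (n + m) (by lia)⟩,
    ⟨(Q.commShiftIso m).app P ≪≫ (shiftFunctor _ m).mapIso e⟩⟩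

lemma obj₃ {T : Triangle (DerivedCategory (ModuleCat.{0} A))} (hT : T ∈ distTriang _)
    (h₁ : isPerf A T.obj₁) (h₂ : isPerf A T.obj₂) : isPerf A T.obj₃ := by
  obtain ⟨P, hPproj, _, ⟨a, b, hP⟩, ⟨i⟩⟩ := h₁
  obtain ⟨R, hRproj, _, ⟨c, d, hR⟩, ⟨j⟩⟩ := h₂
  have := isKProjective_of_forall_projective P b hPproj fun n hn ↦ hP n (.inr hn)
  obtain ⟨g, hg : Q.map g = i.hom ≫ T.mor₁ ≫ j.inv⟩ :=
    Q_map_surjective_of_isKProjective P R (i.hom ≫ T.mor₁ ≫ j.inv)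
  let e (n : ℤ) : (CochainComplex.mappingCone g).X n ≅ P.X (n + 1) ⊞ R.X n :=
    HomologicalComplex.homotopyCofiber.XIsoBiprod g n (n + 1) rfl
  have comm : Q.map g ≫ j.hom = i.hom ≫ T.mor₁ := by simp [hg]
  let E := isoTriangleOfIso₁₂ _ _ (mappingCone_triangle_distinguished g) hT i j comm
  refine ⟨CochainComplex.mappingCone g, fun n ↦ .of_iso (e n).symm inferInstance,
    fun n ↦ .equiv (e n ≪≫ ModuleCat.biprodIsoProd _ _).symm.toLinearEquiv,
    ⟨min a c - 1, max b d, fun n hn ↦ .of_iso ?_ (e n)⟩,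
    ⟨Triangle.π₃.mapIso E⟩⟩
  exact (biprod_isZero_iff _ _).2 ⟨hP _ (by lia), hR _ (by lia)⟩

lemma obj₂ {T : Triangle (DerivedCategory (ModuleCat.{0} A))} (hT : T ∈ distTriang _)
    (h₁ : isPerf A T.obj₁) (h₃ : isPerf A T.obj₃) : isPerf A T.obj₂ :=
  obj₃ (inv_rot_of_distTriang _ hT) (h₃.shift (-1)) h₁

lemma exists_forall_hom_shift_eq_zero {Y X : DerivedCategory (ModuleCat.{0} A)} (hY : isPerf A Y)
    (d : ℤ) [X.IsLE d] : ∃ i₀ : ℤ, ∀ i : ℤ, i₀ ≤ i → ∀ f : Y ⟶ X⟦i⟧, f = 0 := by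
  obtain ⟨P, hproj, -, ⟨a, b, hP⟩, ⟨e⟩⟩ := hY
  have := isKProjective_of_forall_projective P b hproj fun n hn ↦ hP n (.inr hn)
  have : P.IsStrictlyGE a := (P.isStrictlyGE_iff a).2 fun n hn ↦ hP n (.inl hn)
  refine ⟨d + 1 - a, fun i hi f ↦ ?_⟩
  have : (X⟦i⟧).IsLE (d - i) := TStructure.t.isLE_shift X d i (d - i)
  rw [← cancel_epi e.hom, comp_zero]
  exact hom_eq_zero_of_isStrictlyGE_of_isLE P _ (by lia : d - i < a) _

end isPerf

theorem isPerf_of_hom_singleFunctor_eq_zero [IsNoetherianRing A]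
    [IsSemisimpleRing (A ⧸ Ring.jacobson A)] {m n : ℤ} (hmn : m ≤ n)
    (Y : DerivedCategory (ModuleCat.{0} A)) [Y.IsGE m] [Y.IsLE n]
    (hfin : ∀ i, Module.Finite A ((homologyFunctor (ModuleCat.{0} A) i).obj Y))
    (hY : ∀ f : Y ⟶ (singleFunctor _ (m - 1)).obj (ModuleCat.of A (A ⧸ Ring.jacobson A)), f = 0) :
    isPerf A Y := by
  induction n, hmn using Int.leInduction generalizing Y with
  | base =>
    obtain ⟨M, ⟨e⟩⟩ := Y.exists_iso_singleFunctor_obj_of_isGE_of_isLE m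
    have : Module.Finite A M := .equiv ((homologyFunctor _ m).mapIso e ≪≫
      (singleFunctorCompHomologyFunctorIso _ m).app M).toLinearEquiv
    have : Projective M := projective_of_singleFunctor_hom_eq_zero M m fun f ↦ by
      rw [← cancel_epi e.hom, hY (e.hom ≫ f), comp_zero]
    exact (isPerf.singleFunctor_obj M m).of_iso e.symm
  | succ n hmn ih =>
    obtain ⟨P, _, _, f, _⟩ := exists_singleFunctor_hom_epi_homologyFunctor_map Y (n + 1)
    obtain ⟨Z, g, d, hT⟩ := distinguished_cocone_triangle f
    have : Z.IsLE n := isLE_obj₃_of_epi_homologyFunctor_map hT n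
    have : ((singleFunctor _ (n + 1)).obj P).IsGE (m + 1) :=
      TStructure.t.isGE_of_ge _ (m + 1) (n + 1) (by lia)
    have : Z.IsGE m := isGE_obj₃ hT m
    refine .obj₂ hT (isPerf.singleFunctor_obj P (n + 1)) (ih Z (fun i ↦ ?_) fun u ↦ ?_)
    · exact finite_X₂_of_exact (HomologySequence.exact₃ _ hT i (i + 1) rfl) (hfin i)
        (finite_homology_singleFunctor P (n + 1) (i + 1))
    · obtain ⟨v, hv⟩ : ∃ v : ((singleFunctor _ (n + 1)).obj P)⟦(1 : ℤ)⟧ ⟶ _, u = d ≫ v :=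
        Triangle.yoneda_exact₃ _ hT u (hY _)
      rw [hv, singleFunctor_shift_hom_eq_zero_of_projective P _ (by lia : m - 1 < n) v, comp_zero]

end Perfect

theorem statement4_general
    (A : Type) [Ring A] [IsNoetherianRing A] [IsSemisimpleRing (A ⧸ Ring.jacobson A)]
    [HasDerivedCategory.{w} (ModuleCat.{0} A)]
    (Y : DerivedCategory (ModuleCat.{0} A)) (hY : isDb A Y) :
    isPerf A Y ↔
      ∀ X : DerivedCategory (ModuleCat.{0} A), isDb A X →
        ∃ i₀ : ℤ, ∀ i : ℤ, i₀ ≤ i → ∀ f : Y ⟶ X⟦i⟧, f = 0 := by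
  refine ⟨fun h X ⟨_, _, d, hX⟩ ↦ ?_, fun h ↦ ?_⟩
  · have : X.IsLE d := (X.isLE_iff d).2 fun i hi ↦ hX i (.inr hi)
    exact h.exists_forall_hom_shift_eq_zero d
  · obtain ⟨hfin, a, b, hz⟩ := hY
    let T : ModuleCat.{0} A := .of A (A ⧸ Ring.jacobson A)
    obtain ⟨i₀, hi₀⟩ := h _ (isDb_singleFunctor T 0)
    let m : ℤ := min a (1 - i₀)
    have : Y.IsGE m := (Y.isGE_iff m).2 fun i hi ↦ hz i (.inl (by lia))
    have : Y.IsLE (max b m) := (Y.isLE_iff _).2 fun i hi ↦ hz i (.inr (by lia))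
    let e : ((DerivedCategory.singleFunctor _ 0).obj T)⟦1 - m⟧ ≅
        (DerivedCategory.singleFunctor _ (m - 1)).obj T :=
      ((DerivedCategory.singleFunctors _).shiftIso (1 - m) (m - 1) 0 (by lia)).app T
    refine isPerf_of_hom_singleFunctor_eq_zero (le_max_right b m) Y hfin fun f ↦ ?_
    rw [← cancel_mono e.inv, zero_comp]
    exact hi₀ (1 - m) (by lia) _

theorem statement4
    (k : Type) [Field k] (A : Type) [Ring A] [Algebra k A] [FiniteDimensional k A]
    [HasDerivedCategory.{w} (ModuleCat.{0} A)]
    (Y : DerivedCategory (ModuleCat.{0} A)) (hY : isDb A Y) :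
    isPerf A Y ↔
      ∀ X : DerivedCategory (ModuleCat.{0} A), isDb A X →
        ∃ i₀ : ℤ, ∀ i : ℤ, i₀ ≤ i → ∀ f : Y ⟶ X⟦i⟧, f = 0 := by
  have := IsArtinianRing.of_finite k A
  exact statement4_general A Y hY
end

section
/- Let f : X → Y be a morphism in D^b(A-mod) such that f ∘ g = 0 for every perfect complex P (bounded complex of finitely generated projective A-modules) and every morphism g : P → X in D^b(A-mod). Then f = 0. -/
/-!
STATEMENT 8. Let `f : X ⟶ Y` be a morphism in `D^b(A-mod)` such that `g ≫ f = 0` for every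
perfect complex `P` and every morphism `g : P ⟶ X`.  Then `f = 0`.

Here `D^b(A-mod)` is realized inside the unbounded derived category `D(A-Mod)` as the full
subcategory of complexes with bounded, finitely generated cohomology, and the perfect
complexes are the objects isomorphic to the image of a bounded complex of finitely generated
projective `A`-modules.
-/

open CategoryTheory Limits

/-!
Every bounded above `X` with homology in a Serre class with enough projectives is an extension of an
object lying arbitrarily far to the left by a perfect one: a projective mapping onto the top
homology of `X` gives a morphism from a perfect object whose cone has no homology in that degree or
above, and by the octahedral axiom these steps compose. A morphism `f : X ⟶ Y` vanishing on perfect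
objects therefore factors through an object lying to the left of `Y`, and such a morphism vanishes
by the orthogonality of the t-structure.
-/

section

universe w v u

open Pretriangulated ZeroObject

variable {C : Type u} [Category.{v} C] [Abelian C]

/-- A class `S` of objects of `C` has enough projectives if each of its members is a quotient of an
object of `S` which is projective in the ambient category `C` (and not merely relative to `S`). -/
class EnoughProjectivesIn (S : ObjectProperty C) : Prop where
  exists_epi (M : C) : S M → ∃ (F : C) (p : F ⟶ M), S F ∧ Projective F ∧ Epi p

/-- The bounded complexes whose terms are projective objects belonging to `S`: the models of
the perfect objects of the derived category. -/
def boundedProjective (S : ObjectProperty C) : ObjectProperty (CochainComplex C ℤ) := fun K =>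
  (∀ n, S (K.X n)) ∧ (∀ n, Projective (K.X n)) ∧
    ∃ a b : ℤ, K.IsStrictlyGE a ∧ K.IsStrictlyLE b

section

variable {S : ObjectProperty C}

lemma boundedProjective_shift {K : CochainComplex C ℤ} (hK : boundedProjective S K) (m : ℤ) :
    boundedProjective S (K⟦m⟧) := by
  obtain ⟨hS, hproj, a, b, _, _⟩ := hK
  exact ⟨fun n => hS (n + m), fun n => hproj (n + m), a - m, b - m,
    K.isStrictlyGE_shift a m (a - m) (by lia), K.isStrictlyLE_shift b m (b - m) (by lia)⟩

lemma boundedProjective_mappingCone [S.IsClosedUnderExtensions] [S.IsClosedUnderIsomorphisms]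
    {K L : CochainComplex C ℤ} (hK : boundedProjective S K) (hL : boundedProjective S L)
    (φ : K ⟶ L) : boundedProjective S (CochainComplex.mappingCone φ) := by
  obtain ⟨hSK, hprojK, a, b, _, _⟩ := hK
  obtain ⟨hSL, hprojL, a', b', _, _⟩ := hL
  have e (n : ℤ) : K.X (n + 1) ⊞ L.X n ≅ (CochainComplex.mappingCone φ).X n :=
    (HomologicalComplex.homotopyCofiber.XIsoBiprod φ n (n + 1) rfl).symm
  refine ⟨fun n => S.prop_of_iso (e n) (S.prop_biprod (hSK _) (hSL _)),
    fun n => Projective.of_iso (e n) inferInstance, min (a - 1) a', max b b',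
    CochainComplex.isStrictlyGE_mappingCone φ a a' _, ?_⟩
  rw [CochainComplex.isStrictlyLE_iff]
  intro i hi
  rw [CochainComplex.mappingCone.isZero_X_iff]
  exact ⟨K.isZero_of_isStrictlyLE b _, L.isZero_of_isStrictlyLE b' _⟩

lemma boundedProjective_zero [S.ContainsZero] [S.IsClosedUnderIsomorphisms] :
    boundedProjective S 0 := by
  have hzero (n : ℤ) : IsZero ((0 : CochainComplex C ℤ).X n) :=
    (HomologicalComplex.eval _ _ n).map_isZero (isZero_zero _)
  exact ⟨fun n => S.prop_of_isZero (hzero n), fun n => (hzero n).projective, 0, 0,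
    inferInstance, inferInstance⟩

lemma boundedProjective_single [S.ContainsZero] [S.IsClosedUnderIsomorphisms] {F : C} (hF : S F)
    [Projective F] (m : ℤ) :
    boundedProjective S ((CochainComplex.singleFunctor C m).obj F) := by
  have term_eq_or_isZero (n : ℤ) :
      Nonempty (F ≅ ((CochainComplex.singleFunctor C m).obj F).X n) ∨
        IsZero (((CochainComplex.singleFunctor C m).obj F).X n) := by
    obtain rfl | hn := eq_or_ne n m
    · exact .inl ⟨(HomologicalComplex.singleObjXSelf _ n F).symm⟩
    · exact .inr (HomologicalComplex.isZero_single_obj_X _ _ _ _ hn)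
  refine ⟨fun n => ?_, fun n => ?_, m, m, inferInstance, inferInstance⟩
  · exact (term_eq_or_isZero n).elim (fun ⟨e⟩ => S.prop_of_iso e hF) S.prop_of_isZero
  · exact (term_eq_or_isZero n).elim (fun ⟨e⟩ => Projective.of_iso e ‹_›) IsZero.projective

lemma isKProjective_of_boundedProjective {K : CochainComplex C ℤ} (hK : boundedProjective S K) :
    K.IsKProjective := by
  obtain ⟨-, _, -, b, -, _⟩ := hK
  exact CochainComplex.isKProjective_of_projective K b

end

lemma exists_single_hom_epi_homologyMap (K : CochainComplex C ℤ) (m : ℤ) {F : C} [Projective F]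
    (p : F ⟶ K.homology m) [Epi p] :
    ∃ ψ : (CochainComplex.singleFunctor C m).obj F ⟶ K,
      Epi (HomologicalComplex.homologyMap ψ m) := by
  let s : F ⟶ K.cycles m := Projective.factorThru p (K.homologyπ m)
  let ψ : (HomologicalComplex.single C (ComplexShape.up ℤ) m).obj F ⟶ K :=
    HomologicalComplex.mkHomFromSingle (s ≫ K.iCycles m) (fun _ _ => by simp)
  let π := (HomologicalComplex.singleObjCyclesSelfIso (ComplexShape.up ℤ) m F).inv ≫
    HomologicalComplex.homologyπ _ m
  have cyclesMap_ψ : (HomologicalComplex.singleObjCyclesSelfIso (ComplexShape.up ℤ) m F).inv ≫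
      HomologicalComplex.cyclesMap ψ m = s := by
    rw [← cancel_mono (K.iCycles m)]
    simp [ψ]
  have π_homologyMap : π ≫ HomologicalComplex.homologyMap ψ m = p := by
    rw [Category.assoc, HomologicalComplex.homologyπ_naturality, reassoc_of% cyclesMap_ψ]
    exact Projective.factorThru_comp _ _
  exact ⟨ψ, epi_of_epi_fac π_homologyMap⟩

variable [HasDerivedCategory.{w} C]

lemma Q_map_surjective_of_isKProjective_s3 (K L : CochainComplex C ℤ) [K.IsKProjective] :
    Function.Surjective (DerivedCategory.Q.map : (K ⟶ L) → _) := by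
  intro f
  obtain ⟨g, hg⟩ := (CochainComplex.IsKProjective.Qh_map_bijective K
    ((HomotopyCategory.quotient _ _).obj L)).surjective
      ((DerivedCategory.quotientCompQhIso _).hom.app K ≫ f ≫
        (DerivedCategory.quotientCompQhIso _).inv.app L)
  obtain ⟨φ, rfl⟩ := (HomotopyCategory.quotient _ _).map_surjective g
  refine ⟨φ, ?_⟩
  have hφ := DerivedCategory.quotientCompQhIso_hom_naturality φ
  rw [hg] at hφ
  simp only [Category.assoc, Iso.inv_hom_id_app] at hφ
  rw [← cancel_epi ((DerivedCategory.quotientCompQhIso _).hom.app K), ← hφ]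
  exact congrArg _ (Category.comp_id _)

/-- The perfect objects relative to `S`: those isomorphic in the derived category to a bounded
complex of projective objects belonging to `S`. For the finitely generated modules over a ring these
are the perfect complexes. -/
def perfect (S : ObjectProperty C) : ObjectProperty (DerivedCategory C) :=
  (boundedProjective S).map DerivedCategory.Q

/-- The objects of the derived category all of whose homology objects belong to `S`, without any
boundedness condition. -/
def homologyIn (S : ObjectProperty C) : ObjectProperty (DerivedCategory C) := fun X =>
  ∀ n, S ((DerivedCategory.homologyFunctor C n).obj X)

section

variable (S : ObjectProperty C)

instance : (perfect S).IsClosedUnderIsomorphisms :=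
  inferInstanceAs ((boundedProjective S).map _).IsClosedUnderIsomorphisms

instance : (perfect S).IsStableUnderShift ℤ where
  isStableUnderShiftBy m :=
    { le_shift X := by
        rintro ⟨K, hK, ⟨e⟩⟩
        exact ⟨K⟦m⟧, boundedProjective_shift hK m,
          ⟨(DerivedCategory.Q.commShiftIso m).app K ≪≫ (shiftFunctor _ m).mapIso e⟩⟩ }

instance [S.IsClosedUnderExtensions] [S.IsClosedUnderIsomorphisms] :
    (perfect S).IsTriangulatedClosed₃ := .mk' fun T hT => by
  rintro ⟨K, hK, ⟨e⟩⟩ ⟨L, hL, ⟨e'⟩⟩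
  have := isKProjective_of_boundedProjective hK
  obtain ⟨φ, hφ⟩ := Q_map_surjective_of_isKProjective_s3 K L (e.hom ≫ T.mor₁ ≫ e'.inv)
  have comm : DerivedCategory.Q.map φ ≫ e'.hom = e.hom ≫ T.mor₁ := by simp [hφ]
  exact ⟨_, boundedProjective_mappingCone hK hL φ, ⟨Triangle.π₃.mapIso (isoTriangleOfIso₁₂ _ T
    (DerivedCategory.mappingCone_triangle_distinguished φ) hT e e' comm)⟩⟩

instance [S.ContainsZero] [S.IsClosedUnderExtensions] [S.IsClosedUnderIsomorphisms] :
    (perfect S).IsTriangulated where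
  exists_zero := ⟨_, DerivedCategory.Q.map_isZero (isZero_zero _),
    ObjectProperty.prop_map_obj _ _ boundedProjective_zero⟩
  toIsTriangulatedClosed₂ := .of_isTriangulatedClosed₃

instance [S.IsClosedUnderIsomorphisms] : (homologyIn S).IsClosedUnderIsomorphisms where
  of_iso e hX n := S.prop_of_iso ((DerivedCategory.homologyFunctor C n).mapIso e) (hX n)

instance [S.IsSerreClass] : (homologyIn S).IsTriangulatedClosed₃ := .mk' fun _ hT h₁ h₂ n =>
  S.prop_X₂_of_exact (DerivedCategory.HomologySequence.exact₃ _ hT n (n + 1) rfl) (h₂ n)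
    (h₁ (n + 1))

variable {S}

lemma perfect_singleFunctor_obj [S.ContainsZero] [S.IsClosedUnderIsomorphisms] {F : C} (hF : S F)
    [Projective F] (m : ℤ) : perfect S ((DerivedCategory.singleFunctor C m).obj F) :=
  ObjectProperty.prop_map_obj _ DerivedCategory.Q (boundedProjective_single hF m)

lemma homologyIn_singleFunctor_obj [S.ContainsZero] [S.IsClosedUnderIsomorphisms] {F : C}
    (hF : S F) (m : ℤ) : homologyIn S ((DerivedCategory.singleFunctor C m).obj F) := by
  intro n
  obtain hn | rfl | hn := lt_trichotomy n m
  · exact S.prop_of_isZero (DerivedCategory.isZero_of_isGE _ m n hn)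
  · exact S.prop_of_iso ((DerivedCategory.singleFunctorCompHomologyFunctorIso C n).symm.app F) hF
  · exact S.prop_of_isZero (DerivedCategory.isZero_of_isLE _ m n hn)

end

lemma exists_singleFunctor_hom_epi_homologyFunctor_map_s3 (X : DerivedCategory C) (m : ℤ) {F : C}
    [Projective F] (p : F ⟶ (DerivedCategory.homologyFunctor C m).obj X) [Epi p] :
    ∃ ψ : (DerivedCategory.singleFunctor C m).obj F ⟶ X,
      Epi ((DerivedCategory.homologyFunctor C m).map ψ) := by
  obtain ⟨K, ⟨e⟩⟩ := Functor.EssSurj.mem_essImage (F := DerivedCategory.Q) X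
  let i : (DerivedCategory.homologyFunctor C m).obj X ≅ K.homology m :=
    (DerivedCategory.homologyFunctor C m).mapIso e.symm ≪≫
      (DerivedCategory.homologyFunctorFactors C m).app K
  obtain ⟨ψ, hψ⟩ := exists_single_hom_epi_homologyMap K m (p ≫ i.hom)
  let ψ' : (DerivedCategory.singleFunctor C m).obj F ⟶ DerivedCategory.Q.obj K :=
    DerivedCategory.Q.map ψ
  have epi_map_ψ' : Epi ((DerivedCategory.homologyFunctor C m).map ψ') :=
    ((MorphismProperty.epimorphisms C).arrow_mk_iso_iff
      (((Functor.mapArrowFunctor _ _).mapIso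
        (DerivedCategory.homologyFunctorFactors C m)).app (Arrow.mk ψ))).2 hψ
  refine ⟨ψ' ≫ e.hom, ?_⟩
  rw [Functor.map_comp]
  infer_instance

lemma isLE_obj₃_of_epi_homologyFunctor_map_s3 {T : Triangle (DerivedCategory C)}
    (hT : T ∈ distTriang _) {m m' : ℤ} (hm : m' + 1 = m) (h₁ : T.obj₁.IsLE m)
    (h₂ : T.obj₂.IsLE m) (epi : Epi ((DerivedCategory.homologyFunctor C m).map T.mor₁)) :
    T.obj₃.IsLE m' := by
  rw [DerivedCategory.isLE_iff]
  intro i hi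
  have homology₁_isZero : IsZero ((DerivedCategory.homologyFunctor C (i + 1)).obj T.obj₁) :=
    DerivedCategory.isZero_of_isLE _ m _ (by lia)
  have homologyMap₂_eq_zero : (DerivedCategory.homologyFunctor C i).map T.mor₂ = 0 := by
    obtain rfl | hmi : i = m ∨ m < i := by lia
    · exact (DerivedCategory.HomologySequence.epi_homologyMap_mor₁_iff _ hT _).1 epi
    · exact (DerivedCategory.isZero_of_isLE _ m i hmi).eq_of_src _ _
  exact (DerivedCategory.HomologySequence.exact₃ _ hT i (i + 1) rfl).isZero_X₂
    homologyMap₂_eq_zero (homology₁_isZero.eq_of_tgt _ _)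

section

variable (S : ObjectProperty C) [S.IsSerreClass] [EnoughProjectivesIn S]

open ObjectProperty DerivedCategory.TStructure

lemma homologyIn_inf_le_le_extensionProduct_perfect_pred (m m' : ℤ) (hm : m' + 1 = m) :
    homologyIn S ⊓ t.le m ≤ extensionProduct (perfect S) (homologyIn S ⊓ t.le m') := by
  rintro X ⟨hXS, hX⟩
  obtain ⟨F, p, hF, _, _⟩ := EnoughProjectivesIn.exists_epi _ (hXS m)
  obtain ⟨ψ, epi_ψ⟩ := exists_singleFunctor_hom_epi_homologyFunctor_map_s3 X m p
  have isLE_single : ((DerivedCategory.singleFunctor C m).obj F).IsLE m := inferInstance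
  obtain ⟨Z, g, h, hT⟩ := distinguished_cocone_triangle ψ
  exact ⟨_, Z, ψ, g, h, hT, perfect_singleFunctor_obj hF m,
    (homologyIn S).ext_of_isTriangulatedClosed₃ _ hT (homologyIn_singleFunctor_obj hF m) hXS,
    (isLE_obj₃_of_epi_homologyFunctor_map_s3 hT hm isLE_single ⟨hX⟩ epi_ψ).le⟩

lemma homologyIn_inf_le_le_extensionProduct_perfect (b : ℤ) (d : ℕ) :
    homologyIn S ⊓ t.le b ≤ extensionProduct (perfect S) (homologyIn S ⊓ t.le (b - d)) := by
  induction d with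
  | zero => simpa using le_extensionProduct_right (perfect S)
  | succ d ih =>
    calc homologyIn S ⊓ t.le b
      _ ≤ extensionProduct (perfect S) (homologyIn S ⊓ t.le (b - d)) := ih
      _ ≤ extensionProduct (perfect S) (extensionProduct (perfect S)
            (homologyIn S ⊓ t.le (b - (d + 1 : ℕ)))) :=
        monotone_extensionProduct_right _
          (homologyIn_inf_le_le_extensionProduct_perfect_pred S _ _ (by lia))
      _ = extensionProduct (extensionProduct (perfect S) (perfect S))
            (homologyIn S ⊓ t.le (b - (d + 1 : ℕ))) := (extensionProduct_assoc ..).symm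
      _ ≤ extensionProduct (perfect S) (homologyIn S ⊓ t.le (b - (d + 1 : ℕ))) :=
        monotone_extensionProduct_left _
          (extensionProduct_le_of_isTriangulatedClosed₂ le_rfl le_rfl)

theorem statement8_general {X Y : DerivedCategory C} (hX : homologyIn S X) (hX' : t.minus X)
    (hY : t.plus Y) (f : X ⟶ Y) (hf : ∀ P, perfect S P → ∀ g : P ⟶ X, g ≫ f = 0) : f = 0 := by
  obtain ⟨b, hXb⟩ := hX'
  obtain ⟨a, hYa⟩ := hY
  obtain ⟨P, Z, u, v, w, hT, hP, -, hZ⟩ :=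
    homologyIn_inf_le_le_extensionProduct_perfect S b (b - a + 1).toNat X ⟨hX, hXb.le⟩
  obtain ⟨g, hg⟩ := Triangle.yoneda_exact₂ _ hT f (hf P hP u)
  have g_eq_zero : g = 0 :=
    t.zero_of_isLE_of_isGE g (b - (b - a + 1).toNat) a (by lia) ⟨hZ⟩ hYa
  rw [hg, g_eq_zero]
  exact comp_zero

end

end

section

universe u

variable (R : Type u) [Ring R]

instance [IsNoetherianRing R] : (ModuleCat.isFG.{u} R).IsSerreClass where
  exists_zero := ⟨.of R PUnit, ModuleCat.isZero_of_subsingleton _,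
    inferInstanceAs (Module.Finite R PUnit.{u + 1})⟩
  prop_of_mono f hf (_ : Module.Finite R _) :=
    Module.Finite.of_injective f.hom ((ModuleCat.mono_iff_injective f).1 hf)
  prop_of_epi f hf (_ : Module.Finite R _) :=
    Module.Finite.of_surjective f.hom ((ModuleCat.epi_iff_surjective f).1 hf)
  prop_X₂_of_shortExact {T} hT (_ : Module.Finite R _) (_ : Module.Finite R _) := by
    have := isNoetherian_of_range_eq_ker T.f.hom T.g.hom hT.exact.moduleCat_range_eq_ker
    exact inferInstanceAs (Module.Finite R T.X₂)

instance : EnoughProjectivesIn (ModuleCat.isFG.{u} R) where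
  exists_epi M (_ : Module.Finite R M) := by
    obtain ⟨n, p, hp⟩ := Module.Finite.exists_fin' R M
    exact ⟨.of R (Fin n → R), ModuleCat.ofHom p, inferInstanceAs (Module.Finite R (Fin n → R)),
      ModuleCat.projective_of_free (Pi.basisFun R (Fin n)), (ModuleCat.epi_iff_surjective _).2 hp⟩

end

section

universe w

variable {A : Type} [Ring A] [HasDerivedCategory.{w} (ModuleCat.{0} A)]
  {X : DerivedCategory (ModuleCat.{0} A)}

lemma isPerf_of_perfect (hX : perfect (ModuleCat.isFG A) X) : isPerf A X := by
  obtain ⟨K, ⟨hfin, hproj, a, b, _, _⟩, e⟩ := hX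
  refine ⟨K, hproj, hfin, ⟨a, b, fun n hn => ?_⟩, e⟩
  exact hn.elim (fun h => K.isZero_of_isStrictlyGE a n h) (fun h => K.isZero_of_isStrictlyLE b n h)

lemma minus_of_isDb (hX : isDb A X) : DerivedCategory.TStructure.t.minus X := by
  obtain ⟨-, a, b, h⟩ := hX
  exact ⟨b, (DerivedCategory.isLE_iff X b).2 fun i hi => h i (.inr hi)⟩

lemma plus_of_isDb (hX : isDb A X) : DerivedCategory.TStructure.t.plus X := by
  obtain ⟨-, a, b, h⟩ := hX
  exact ⟨a, (DerivedCategory.isGE_iff X a).2 fun i hi => h i (.inl hi)⟩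

end

theorem statement8
    (k : Type) [Field k] (A : Type) [Ring A] [Algebra k A] [FiniteDimensional k A]
    [HasDerivedCategory.{w} (ModuleCat.{0} A)]
    (X Y : DerivedCategory (ModuleCat.{0} A)) (hX : isDb A X) (hY : isDb A Y)
    (f : X ⟶ Y)
    (hf : ∀ P : DerivedCategory (ModuleCat.{0} A), isPerf A P →
      ∀ g : P ⟶ X, g ≫ f = 0) :
    f = 0 := by
  have : IsNoetherianRing A := .of_finite k A
  exact statement8_general (ModuleCat.isFG A) hX.1 (minus_of_isDb hX) (plus_of_isDb hY) f
    fun P hP => hf P (isPerf_of_perfect hP)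
end
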